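/- For every M > 0 there exists a constant C > 0 with the following property: for all real numbers l with 0 < l ≤ M, every ω ≥ 0, and every real number d ≥ 0 satisfying cosh d = (cosh(ω/2) + cosh(l/2)²) / sinh(l/2)², one has |d − 2·log(1/l) − ω/2| ≤ C. -/

import Mathlib

open Real

/-!
A pair of pants with boundary lengths `l, l, ω` is cut by its symmetries into four right-angled
pentagons, for which the hexagon formula collapses to `sinh (d / 2) * sinh (l / 2) = cosh (ω / 4)`.
Up to factors controlled by `l`, `sinh (d / 2)`, `sinh (l / 2)` and `cosh (ω / 4)` are
`exp (d / 2)`, `l / 2` and `exp (ω / 4)`, so taking logarithms gives the estimate.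
-/

theorem exp_le_two_mul_cosh (x : ℝ) : exp x ≤ 2 * cosh x := by
  rw [cosh_eq]
  linarith [exp_pos (-x)]

theorem cosh_le_exp_of_nonneg {x : ℝ} (hx : 0 ≤ x) : cosh x ≤ exp x := by
  rw [← cosh_add_sinh]
  linarith [sinh_nonneg_iff.2 hx]

theorem two_mul_sinh_le_exp (x : ℝ) : 2 * sinh x ≤ exp x := by
  rw [sinh_eq]
  linarith [exp_pos (-x)]

theorem exp_le_two_mul_sinh_add_one {x : ℝ} (hx : 0 ≤ x) : exp x ≤ 2 * sinh x + 1 := by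
  rw [sinh_eq]
  linarith [exp_le_one_iff.2 (neg_nonpos.2 hx)]

theorem sinh_le_mul_exp (x : ℝ) : sinh x ≤ x * exp x :=
  calc
    sinh x = exp x * (1 - exp (-(2 * x))) / 2 := by
      rw [sinh_eq, mul_sub, ← exp_add]
      ring_nf
    _ ≤ exp x * (2 * x) / 2 := by
      gcongr
      linarith [one_sub_le_exp_neg (2 * x)]
    _ = x * exp x := by ring

section Pentagon

variable {a b c : ℝ}

theorem le_add_log_add_of_sinh_mul_sinh_eq_cosh (hb : 0 < b) (h : sinh a * sinh b = cosh c) :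
    c ≤ a + log b + b := by
  have hexp : exp c ≤ exp a * b * exp b :=
    calc
      exp c ≤ 2 * cosh c := exp_le_two_mul_cosh c
      _ = 2 * sinh a * sinh b := by rw [← h, mul_assoc]
      _ ≤ exp a * (b * exp b) :=
        mul_le_mul (two_mul_sinh_le_exp a) (sinh_le_mul_exp b) (sinh_pos_iff.2 hb).le (exp_pos a).le
      _ = exp a * b * exp b := (mul_assoc _ _ _).symm
  rwa [← exp_le_exp, exp_add, exp_add, exp_log hb]

theorem add_log_le_of_sinh_mul_sinh_eq_cosh (ha : 0 ≤ a) (hb : 0 < b) (hc : 0 ≤ c)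
    (h : sinh a * sinh b = cosh c) : a + log b ≤ c + log 2 + b := by
  have hsinh : sinh a * b ≤ exp c :=
    calc
      sinh a * b ≤ sinh a * sinh b :=
        mul_le_mul_of_nonneg_left (self_le_sinh_iff.2 hb.le) (sinh_nonneg_iff.2 ha)
      _ = cosh c := h
      _ ≤ exp c := cosh_le_exp_of_nonneg hc
  have hexp : exp a * b ≤ exp c * 2 * exp b :=
    calc
      exp a * b ≤ (2 * sinh a + 1) * b := by
        gcongr
        exact exp_le_two_mul_sinh_add_one ha
      _ = 2 * (sinh a * b) + b * 1 := by ring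
      _ ≤ 2 * exp c + (2 * b) * exp c := by
        gcongr
        · linarith
        · exact one_le_exp hc
      _ = exp c * 2 * (b + 1) := by ring
      _ ≤ exp c * 2 * exp b := by
        gcongr
        exact add_one_le_exp b
  rwa [← exp_le_exp, exp_add, exp_add, exp_add, exp_log hb, exp_log two_pos]

theorem abs_add_log_sub_le_of_sinh_mul_sinh_eq_cosh (ha : 0 ≤ a) (hb : 0 < b) (hc : 0 ≤ c)
    (h : sinh a * sinh b = cosh c) : |a + log b - c| ≤ b + log 2 := by
  have hlower := le_add_log_add_of_sinh_mul_sinh_eq_cosh hb h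
  have hupper := add_log_le_of_sinh_mul_sinh_eq_cosh ha hb hc h
  have hlog : 0 < log 2 := log_pos one_lt_two
  exact abs_le.2 ⟨by linarith, by linarith⟩

end Pentagon

section Pants

variable {l ω d : ℝ}

theorem sinh_half_mul_sinh_half_eq_cosh_quarter (hl : 0 < l) (hd : 0 ≤ d)
    (h : cosh d = (cosh (ω / 2) + cosh (l / 2) ^ 2) / sinh (l / 2) ^ 2) :
    sinh (d / 2) * sinh (l / 2) = cosh (ω / 4) := by
  have hsinh_l : 0 < sinh (l / 2) := sinh_pos_iff.2 (half_pos hl)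
  have hsinh_d : 0 ≤ sinh (d / 2) := sinh_nonneg_iff.2 (by positivity)
  have hcosh_d : cosh d = 2 * sinh (d / 2) ^ 2 + 1 :=
    calc
      cosh d = cosh (2 * (d / 2)) := by ring_nf
      _ = 2 * sinh (d / 2) ^ 2 + 1 := by
        rw [cosh_two_mul, cosh_sq]
        ring
  have hcosh_ω : cosh (ω / 2) = 2 * cosh (ω / 4) ^ 2 - 1 :=
    calc
      cosh (ω / 2) = cosh (2 * (ω / 4)) := by ring_nf
      _ = 2 * cosh (ω / 4) ^ 2 - 1 := by
        rw [cosh_two_mul, sinh_sq]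
        ring
  rw [eq_div_iff (pow_pos hsinh_l 2).ne', hcosh_d, hcosh_ω, cosh_sq (l / 2)] at h
  have hsq : (sinh (d / 2) * sinh (l / 2)) ^ 2 = cosh (ω / 4) ^ 2 := by linarith
  exact (pow_left_inj₀ (mul_nonneg hsinh_d hsinh_l.le) (cosh_pos _).le two_ne_zero).1 hsq

theorem dual_curve_length_estimate_once_general (hl : 0 < l) (hω : 0 ≤ ω) (hd : 0 ≤ d)
    (h : cosh d = (cosh (ω / 2) + cosh (l / 2) ^ 2) / sinh (l / 2) ^ 2) :
    |d - 2 * log (1 / l) - ω / 2| ≤ l + 4 * log 2 := by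
  have hpentagon : |d / 2 + log (l / 2) - ω / 4| ≤ l / 2 + log 2 :=
    abs_add_log_sub_le_of_sinh_mul_sinh_eq_cosh (by positivity) (by positivity) (by positivity)
      (sinh_half_mul_sinh_half_eq_cosh_quarter hl hd h)
  have hlog : 0 < log 2 := log_pos one_lt_two
  rw [log_div hl.ne' two_ne_zero, abs_le] at hpentagon
  rw [one_div, log_inv, abs_le]
  constructor <;> linarith

end Pants

/-- For a hyperbolic pair of pants with boundary lengths `l, l, ω` and `l ≤ M`,
the distance `d` between the two boundary components of length `l` satisfies
`d = 2·log(1/l) + ω/2 + O(1)`, uniformly. -/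
theorem dual_curve_length_estimate_once (M : ℝ) (hM : 0 < M) :
    ∃ C : ℝ, 0 < C ∧ ∀ l ω d : ℝ,
      0 < l → l ≤ M → 0 ≤ ω → 0 ≤ d →
      Real.cosh d = (Real.cosh (ω / 2) + Real.cosh (l / 2) ^ 2) /
        Real.sinh (l / 2) ^ 2 →
      |d - 2 * Real.log (1 / l) - ω / 2| ≤ C :=
  ⟨M + 4 * log 2, by positivity, fun _ _ _ hl hlM hω hd h ↦
    (dual_curve_length_estimate_once_general hl hω hd h).trans (by gcongr)⟩
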